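/- Let q ≥ 1 be an integer, n = q + 2, a > 1, and let X = Σ_{i=1}^n Rᵢ ∂/∂xᵢ be a polynomial vector field of degree m defined on S_{1,q}. Assume x₁R₂ − x₂R₁ ≠ 0 (equivalently, the extactic polynomial E_W(X) with W = span{x₁,x₂} is nonzero; this replaces the assumption that X has only finitely many invariant algebraic sets). Then there are at most m − 1 pairwise non-proportional nonzero pairs (a₁,a₂) ∈ ℝ² for which the hyperplane {a₁x₁ + a₂x₂ = 0} is invariant for X; since each such hyperplane meets S_{1,q} in exactly two connected components, X has at most 2(m − 1) invariant meridians. -/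

import Mathlib

open MvPolynomial

/-- The polynomial `h = (x₁² + x₂² − a²)² + x₃² + ⋯ + x_n² − 1`
whose zero set is `S_{1,q} ⊂ ℝ^{q+2}`. -/
noncomputable def h1q (q : ℕ) (a : ℝ) : MvPolynomial (Fin (q+2)) ℝ :=
  (X 0 ^ 2 + X 1 ^ 2 - C (a^2))^2
    + (∑ j : Fin q, X (⟨2+(j:ℕ), by omega⟩ : Fin (q+2)) ^ 2) - 1

/-
Write `r = x₁² + x₂²`, let `E = x₁R₂ − x₂R₁`, a polynomial of degree at most `m + 1`, and let `P`
be the product of the linear forms of the invariant hyperplanes. Each of these forms divides `E`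
and they are pairwise coprime, so `P ∣ E`; this alone bounds their number by `m + 1`. The equation
of the surface has the shape `r² + g` with `deg g ≤ 2`. As its cofactor has degree less than `m`,
comparing degrees in `X h = K h` shows that `X r` is a multiple of `r` up to terms of degree less
than `m`, and therefore that `r` divides the components of `E` of degree at least `m`. If `deg E ≥
m`, the leading form of `E` is then divisible by `P` and by `r`, which are coprime because `-1` is
not a square, and two degrees are gained: `deg P + 2 ≤ m + 1`.
-/

section Homogeneous

variable {σ k : Type*}

lemma homogeneousComponent_add_mul_of_isHomogeneous [CommSemiring k] {p : MvPolynomial σ k} {d : ℕ}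
    (hp : p.IsHomogeneous d) (f : MvPolynomial σ k) (n : ℕ) :
    homogeneousComponent (d + n) (p * f) = p * homogeneousComponent n f := by
  let _ : GradedAlgebra (homogeneousSubmodule σ k) := gradedAlgebra
  simp only [← decomposition.decompose'_apply]
  exact DirectSum.coe_decompose_mul_add_of_left_mem (homogeneousSubmodule σ k) hp

lemma dvd_homogeneousComponent [CommSemiring k] {p f : MvPolynomial σ k} {d : ℕ}
    (hp : p.IsHomogeneous d) (h : p ∣ f) (n : ℕ) : p ∣ homogeneousComponent n f := by
  let _ : GradedAlgebra (homogeneousSubmodule σ k) := gradedAlgebra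
  have hI : (Ideal.span {p}).IsHomogeneous (homogeneousSubmodule σ k) :=
    Ideal.homogeneous_span _ _ fun _ hx => ⟨d, hx ▸ hp⟩
  rw [← Ideal.mem_span_singleton] at h ⊢
  exact homogeneousComponent_mem_of_mem hI h n

lemma homogeneousComponent_totalDegree_ne_zero [CommSemiring k] {p : MvPolynomial σ k}
    (hp : p ≠ 0) : homogeneousComponent p.totalDegree p ≠ 0 := by
  obtain ⟨d, hd, hdeg⟩ := Finset.exists_mem_eq_sup p.support (support_nonempty.mpr hp)
    fun s => s.sum fun _ e => e
  refine ne_zero_iff.mpr ⟨d, ?_⟩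
  have hdeg' : d.degree = p.totalDegree := hdeg.symm
  rwa [coeff_homogeneousComponent, if_pos hdeg', ← mem_support_iff]

lemma le_totalDegree_of_isHomogeneous_of_dvd [CommSemiring k] [IsCancelMulZero k]
    {p f : MvPolynomial σ k} {d : ℕ} (hp : p.IsHomogeneous d) (hf : f ≠ 0) (h : p ∣ f) :
    d ≤ f.totalDegree :=
  hp.totalDegree (ne_zero_of_dvd_ne_zero hf h) ▸ totalDegree_le_of_dvd_of_isDomain h hf

lemma irreducible_of_isHomogeneous_one [Field k] {p : MvPolynomial σ k}
    (hp : p.IsHomogeneous 1) (hp0 : p ≠ 0) : Irreducible p := by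
  refine irreducible_of_totalDegree_eq_one (hp.totalDegree hp0) fun c hc => ?_
  obtain ⟨d, hd⟩ := ne_zero_iff.mp hp0
  exact isUnit_iff_ne_zero.mpr (ne_zero_of_dvd_ne_zero hd (hc d))

lemma isRelPrime_of_irreducible_of_eval [CommSemiring k] {p f : MvPolynomial σ k}
    (hp : Irreducible p) {x : σ → k} (hpx : eval x p = 0) (hfx : eval x f ≠ 0) :
    IsRelPrime p f := by
  rw [hp.isRelPrime_iff_not_dvd]
  rintro ⟨g, rfl⟩
  exact hfx (by rw [map_mul, hpx, zero_mul])

end Homogeneous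

section VectorField

variable {σ k : Type*}

lemma mkDerivation_eq_sum_mul_pderiv [CommSemiring k] [Fintype σ] (R : σ → MvPolynomial σ k)
    (p : MvPolynomial σ k) : mkDerivation k R p = ∑ i, R i * pderiv i p := by
  classical
  have hsum (f : MvPolynomial σ k) : (∑ i, R i • pderiv i) f = ∑ i, R i * pderiv i f := by
    rw [← Derivation.coeFnAddMonoidHom_apply, map_sum, Finset.sum_apply]
    rfl
  have hmk : mkDerivation k R = ∑ i, R i • pderiv i :=
    derivation_ext fun j => by simp [hsum, pderiv_X, Pi.single_apply]
  rw [hmk, hsum]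

lemma dvd_mkDerivation_iff [CommSemiring k] [Fintype σ] {R : σ → MvPolynomial σ k}
    {p : MvPolynomial σ k} :
    p ∣ mkDerivation k R p ↔ ∃ K, ∑ i, R i * pderiv i p = K * p := by
  rw [mkDerivation_eq_sum_mul_pderiv, dvd_iff_exists_eq_mul_left]

lemma totalDegree_derivation_le [CommSemiring k]
    {D : Derivation k (MvPolynomial σ k) (MvPolynomial σ k)} {m : ℕ}
    (hD : ∀ i, (D (X i)).totalDegree ≤ m) (p : MvPolynomial σ k) :
    (D p).totalDegree ≤ m + (p.totalDegree - 1) := by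
  have hmk : D = mkDerivation k fun i => D (X i) := derivation_ext fun i => by rw [mkDerivation_X]
  rw [p.as_sum, map_sum, ← p.as_sum]
  refine totalDegree_finsetSum_le fun s hs => ?_
  rw [hmk, mkDerivation_monomial]
  refine (totalDegree_smul_le _ _).trans (totalDegree_finsetSum_le fun i hi => ?_)
  have hlower : (s - Finsupp.single i 1).degree + 1 = s.degree := by
    have hle : Finsupp.single i 1 ≤ s :=
      Finsupp.single_le_iff.mpr (Nat.one_le_iff_ne_zero.mpr (Finsupp.mem_support_iff.mp hi))
    simpa only [map_add, Finsupp.degree_single] using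
      congrArg Finsupp.degree (tsub_add_cancel_of_le hle)
  have hmul := totalDegree_mul (monomial (s - Finsupp.single i 1) (s i : k)) (D (X i))
  have hmon : _ ≤ (s - Finsupp.single i 1).degree :=
    totalDegree_monomial_le (s - Finsupp.single i 1) (s i : k)
  have hs' : s.degree ≤ p.totalDegree := le_totalDegree hs
  have hDi := hD i
  simp only [smul_eq_mul]
  omega

lemma totalDegree_cofactor_lt [CommSemiring k] [IsCancelMulZero k]
    {D : Derivation k (MvPolynomial σ k) (MvPolynomial σ k)} {m : ℕ}
    (hD : ∀ i, (D (X i)).totalDegree ≤ m) {h K : MvPolynomial σ k} (hh : h.totalDegree ≠ 0)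
    (hK : K ≠ 0) (hinv : D h = h * K) : K.totalDegree < m := by
  have hh0 : h ≠ 0 := by rintro rfl; exact hh totalDegree_zero
  have hle := totalDegree_derivation_le hD h
  rw [hinv, totalDegree_mul_of_isDomain hh0 hK] at hle
  omega

lemma totalDegree_sq_add [CommSemiring k] [IsCancelMulZero k] {f g : MvPolynomial σ k}
    (hf : f.totalDegree ≠ 0) (hg : g.totalDegree ≤ f.totalDegree) :
    (f ^ 2 + g).totalDegree = 2 * f.totalDegree := by
  have hf0 : f ≠ 0 := by rintro rfl; exact hf totalDegree_zero
  have hsq : (f ^ 2).totalDegree = 2 * f.totalDegree := by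
    rw [sq, totalDegree_mul_of_isDomain hf0 hf0, two_mul]
  rw [totalDegree_add_eq_left_of_totalDegree_lt (by omega), hsq]

lemma totalDegree_two_mul_derivation_sub_lt [CommRing k] [IsDomain k]
    {D : Derivation k (MvPolynomial σ k) (MvPolynomial σ k)} {m : ℕ}
    (hD : ∀ i, (D (X i)).totalDegree ≤ m) {f g K : MvPolynomial σ k}
    (hf : f.totalDegree ≠ 0) (hg : g.totalDegree ≤ f.totalDegree)
    (hinv : D (f ^ 2 + g) = (f ^ 2 + g) * K) (hne : 2 * D f - f * K ≠ 0) :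
    (2 * D f - f * K).totalDegree < m := by
  have hf0 : f ≠ 0 := by rintro rfl; exact hf totalDegree_zero
  have hmul : f * (2 * D f - f * K) = g * K - D g := by
    simp only [map_add, Derivation.leibniz_pow, smul_eq_mul, nsmul_eq_mul, Nat.cast_ofNat,
      Nat.add_one_sub_one, pow_one] at hinv
    linear_combination hinv
  have hgK : (g * K).totalDegree < m + f.totalDegree := by
    rcases eq_or_ne K 0 with rfl | hK
    · rw [mul_zero, totalDegree_zero]
      omega
    · have hKm : K.totalDegree < m :=
        totalDegree_cofactor_lt hD (by rw [totalDegree_sq_add hf hg]; omega) hK hinv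
      have := totalDegree_mul g K
      omega
  have hDg : (D g).totalDegree < m + f.totalDegree :=
    (totalDegree_derivation_le hD g).trans_lt (by omega)
  have hlt : (f * (2 * D f - f * K)).totalDegree < m + f.totalDegree :=
    hmul ▸ (totalDegree_sub _ _).trans_lt (max_lt hgK hDg)
  rw [totalDegree_mul_of_isDomain hf0 hne] at hlt
  omega

lemma dvd_homogeneousComponent_derivation [Field k] [NeZero (2 : k)]
    {D : Derivation k (MvPolynomial σ k) (MvPolynomial σ k)} {m : ℕ}
    (hD : ∀ i, (D (X i)).totalDegree ≤ m) {f g : MvPolynomial σ k} {e : ℕ}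
    (hfe : f.IsHomogeneous e) (hf : f.totalDegree ≠ 0) (hg : g.totalDegree ≤ f.totalDegree)
    (hinv : f ^ 2 + g ∣ D (f ^ 2 + g)) {n : ℕ} (hn : m ≤ n) :
    f ∣ homogeneousComponent n (D f) := by
  obtain ⟨K, hK⟩ := hinv
  have hlow : homogeneousComponent n (2 * D f - f * K) = 0 := by
    by_cases hne : 2 * D f - f * K = 0
    · rw [hne, map_zero]
    · exact homogeneousComponent_eq_zero _ _
        ((totalDegree_two_mul_derivation_sub_lt hD hf hg hK hne).trans_le hn)
  have h2D : f ∣ C 2 * homogeneousComponent n (D f) := by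
    rw [← homogeneousComponent_C_mul, map_ofNat, ← sub_add_cancel (2 * D f) (f * K), map_add,
      hlow, zero_add]
    exact dvd_homogeneousComponent hfe (dvd_mul_right f K) n
  exact ((two_ne_zero (α := k)).isUnit.map C).dvd_mul_left.mp h2D

end VectorField

section Plane

variable {σ k : Type*}

/-- The linear form `v₁ xᵢ + v₂ xⱼ`, whose zero set is a hyperplane containing the axis
`xᵢ = xⱼ = 0`. -/
noncomputable def linearForm [CommSemiring k] (i j : σ) (v : k × k) : MvPolynomial σ k :=
  C v.1 * X i + C v.2 * X j

/-- The squared distance `xᵢ² + xⱼ²` to the axis `xᵢ = xⱼ = 0`. -/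
noncomputable def sqRadius (k : Type*) [CommSemiring k] (i j : σ) : MvPolynomial σ k :=
  X i ^ 2 + X j ^ 2

/-- The extactic polynomial of the vector field `D` for the space spanned by `xᵢ` and `xⱼ`: the
determinant of the rows `(xᵢ, xⱼ)` and `(D xᵢ, D xⱼ)`. -/
noncomputable def extactic [CommRing k] (D : Derivation k (MvPolynomial σ k) (MvPolynomial σ k))
    (i j : σ) : MvPolynomial σ k :=
  X i * D (X j) - X j * D (X i)

lemma isHomogeneous_linearForm [CommSemiring k] (i j : σ) (v : k × k) :
    (linearForm i j v).IsHomogeneous 1 :=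
  (isHomogeneous_C_mul_X _ _).add (isHomogeneous_C_mul_X _ _)

lemma isHomogeneous_prod_linearForm [CommSemiring k] (i j : σ) (s : Finset (k × k)) :
    (∏ v ∈ s, linearForm i j v).IsHomogeneous s.card := by
  simpa only [Finset.sum_const, smul_eq_mul, mul_one] using
    IsHomogeneous.prod s (linearForm i j) (fun _ => 1) fun v _ => isHomogeneous_linearForm i j v

lemma isHomogeneous_sqRadius [CommSemiring k] (i j : σ) : (sqRadius k i j).IsHomogeneous 2 :=
  (isHomogeneous_X_pow _ _).add (isHomogeneous_X_pow _ _)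

@[simp]
lemma eval_linearForm [CommSemiring k] (x : σ → k) (i j : σ) (v : k × k) :
    eval x (linearForm i j v) = v.1 * x i + v.2 * x j := by
  simp [linearForm]

@[simp]
lemma eval_sqRadius [CommSemiring k] (x : σ → k) (i j : σ) :
    eval x (sqRadius k i j) = x i ^ 2 + x j ^ 2 := by
  simp [sqRadius]

lemma exists_apply_eq_apply_eq {i j : σ} (hij : i ≠ j) (a b : k) :
    ∃ x : σ → k, x i = a ∧ x j = b := by
  classical
  exact ⟨Function.update (fun _ => b) i a, by simp, by simp [hij.symm]⟩

lemma linearForm_ne_zero [CommSemiring k] {i j : σ} (hij : i ≠ j) {v : k × k} (hv : v ≠ 0) :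
    linearForm i j v ≠ 0 := by
  intro h
  have heval (a b : k) : v.1 * a + v.2 * b = 0 := by
    obtain ⟨x, rfl, rfl⟩ := exists_apply_eq_apply_eq hij a b
    rw [← eval_linearForm, h, map_zero]
  exact hv (Prod.ext (by simpa using heval 1 0) (by simpa using heval 0 1))

lemma sqRadius_ne_zero [CommSemiring k] [Nontrivial k] {i j : σ} (hij : i ≠ j) :
    sqRadius k i j ≠ 0 := by
  intro h
  obtain ⟨x, hi, hj⟩ := exists_apply_eq_apply_eq hij (1 : k) 0
  have heval : eval x (sqRadius k i j) = 1 := by simp [hi, hj]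
  rw [h, map_zero] at heval
  exact zero_ne_one heval

lemma fst_ne_zero_or_snd_ne_zero [Zero k] {v : k × k} (hv : v ≠ 0) : v.1 ≠ 0 ∨ v.2 ≠ 0 :=
  not_and_or.mp fun h => hv (Prod.ext h.1 h.2)

variable [Field k] {i j : σ}

lemma irreducible_linearForm (hij : i ≠ j) {v : k × k} (hv : v ≠ 0) :
    Irreducible (linearForm i j v) :=
  irreducible_of_isHomogeneous_one (isHomogeneous_linearForm i j v) (linearForm_ne_zero hij hv)

lemma det_ne_zero_of_forall_ne_smul {v w : k × k} (hw : w ≠ 0) (h : ∀ t : k, v ≠ t • w) :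
    v.1 * w.2 - v.2 * w.1 ≠ 0 := by
  intro hdet
  rcases fst_ne_zero_or_snd_ne_zero hw with hw1 | hw2
  · refine h (v.1 / w.1) (Prod.ext (div_mul_cancel₀ _ hw1).symm ?_)
    rw [Prod.smul_snd, smul_eq_mul]
    field_simp
    linear_combination -hdet
  · refine h (v.2 / w.2) (Prod.ext ?_ (div_mul_cancel₀ _ hw2).symm)
    rw [Prod.smul_fst, smul_eq_mul]
    field_simp
    linear_combination hdet

lemma isRelPrime_linearForm (hij : i ≠ j) {v w : k × k} (hv : v ≠ 0) (hw : w ≠ 0)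
    (h : ∀ t : k, v ≠ t • w) : IsRelPrime (linearForm i j v) (linearForm i j w) := by
  obtain ⟨x, hi, hj⟩ := exists_apply_eq_apply_eq hij (-v.2) v.1
  refine isRelPrime_of_irreducible_of_eval (irreducible_linearForm hij hv) (x := x) ?_ ?_
  · rw [eval_linearForm, hi, hj]
    ring
  · rw [eval_linearForm, hi, hj]
    convert det_ne_zero_of_forall_ne_smul hw h using 1
    ring

lemma neZero_two_of_not_isSquare_neg_one (hk : ¬IsSquare (-1 : k)) : NeZero (2 : k) :=
  ⟨fun h2 => hk ⟨1, by linear_combination -h2⟩⟩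

lemma sq_add_sq_ne_zero_of_not_isSquare_neg_one (hk : ¬IsSquare (-1 : k)) {v : k × k}
    (hv : v ≠ 0) : v.1 ^ 2 + v.2 ^ 2 ≠ 0 := by
  intro h
  rcases fst_ne_zero_or_snd_ne_zero hv with hv1 | hv2
  · refine hk ⟨v.2 / v.1, ?_⟩
    field_simp
    linear_combination -h
  · refine hk ⟨v.1 / v.2, ?_⟩
    field_simp
    linear_combination -h

lemma isRelPrime_linearForm_sqRadius (hk : ¬IsSquare (-1 : k)) (hij : i ≠ j) {v : k × k}
    (hv : v ≠ 0) : IsRelPrime (linearForm i j v) (sqRadius k i j) := by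
  obtain ⟨x, hi, hj⟩ := exists_apply_eq_apply_eq hij (-v.2) v.1
  refine isRelPrime_of_irreducible_of_eval (irreducible_linearForm hij hv) (x := x) ?_ ?_
  · rw [eval_linearForm, hi, hj]
    ring
  · rw [eval_sqRadius, hi, hj, neg_sq, add_comm]
    exact sq_add_sq_ne_zero_of_not_isSquare_neg_one hk hv

variable {D : Derivation k (MvPolynomial σ k) (MvPolynomial σ k)} {m : ℕ}

lemma totalDegree_extactic_le (hD : ∀ i, (D (X i)).totalDegree ≤ m) :
    (extactic D i j).totalDegree ≤ m + 1 := by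
  have hmul (a b : σ) : (X a * D (X b)).totalDegree ≤ m + 1 := by
    refine (totalDegree_mul _ _).trans ?_
    rw [totalDegree_X, add_comm]
    exact Nat.add_le_add_right (hD b) 1
  exact (totalDegree_sub _ _).trans (max_le (hmul i j) (hmul j i))

lemma linearForm_dvd_extactic {v : k × k} (hv : v ≠ 0)
    (hinv : linearForm i j v ∣ D (linearForm i j v)) : linearForm i j v ∣ extactic D i j := by
  have hDL : D (linearForm i j v) = C v.1 * D (X i) + C v.2 * D (X j) := by
    simp [linearForm, C_mul']
  have h1 : linearForm i j v ∣ C v.1 * extactic D i j := by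
    have : C v.1 * extactic D i j
        = linearForm i j v * D (X j) - X j * D (linearForm i j v) := by
      rw [hDL, linearForm, extactic]
      ring
    exact this ▸ dvd_sub (dvd_mul_right _ _) (hinv.mul_left _)
  have h2 : linearForm i j v ∣ C v.2 * extactic D i j := by
    have : C v.2 * extactic D i j
        = X i * D (linearForm i j v) - linearForm i j v * D (X i) := by
      rw [hDL, linearForm, extactic]
      ring
    exact this ▸ dvd_sub (hinv.mul_left _) (dvd_mul_right _ _)
  rcases fst_ne_zero_or_snd_ne_zero hv with hv1 | hv2
  · exact (hv1.isUnit.map C).dvd_mul_left.mp h1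
  · exact (hv2.isUnit.map C).dvd_mul_left.mp h2

lemma prod_linearForm_dvd_extactic (hij : i ≠ j) {s : Finset (k × k)} (hs0 : ∀ v ∈ s, v ≠ 0)
    (hprop : ∀ v ∈ s, ∀ w ∈ s, v ≠ w → ∀ t : k, v ≠ t • w)
    (hsinv : ∀ v ∈ s, linearForm i j v ∣ D (linearForm i j v)) :
    ∏ v ∈ s, linearForm i j v ∣ extactic D i j :=
  Finset.prod_dvd_of_isRelPrime
    (fun v hv w hw hvw => isRelPrime_linearForm hij (hs0 v hv) (hs0 w hw) (hprop v hv w hw hvw))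
    fun v hv => linearForm_dvd_extactic (hs0 v hv) (hsinv v hv)

/- Uses `xᵢ E = (xᵢ² + xⱼ²) D xⱼ - xⱼ (xᵢ D xᵢ + xⱼ D xⱼ)`, whose last bracket is
`D (xᵢ² + xⱼ²) / 2`. -/
lemma sqRadius_dvd_homogeneousComponent_extactic (hk : ¬IsSquare (-1 : k)) (hij : i ≠ j)
    {n : ℕ} (h : sqRadius k i j ∣ homogeneousComponent n (D (sqRadius k i j))) :
    sqRadius k i j ∣ homogeneousComponent n (extactic D i j) := by
  have := neZero_two_of_not_isSquare_neg_one hk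
  have hX : IsRelPrime (sqRadius k i j) (X i) := by
    simpa [linearForm] using
      (isRelPrime_linearForm_sqRadius hk hij (v := (1, 0)) (by simp)).symm
  have hkey : X i * (C 2 * extactic D i j)
      = sqRadius k i j * (2 * D (X j)) - X j * D (sqRadius k i j) := by
    simp only [sqRadius, extactic, map_add, Derivation.leibniz_pow, smul_eq_mul, nsmul_eq_mul,
      Nat.cast_ofNat, Nat.add_one_sub_one, pow_one, map_ofNat]
    ring
  have hXE : sqRadius k i j ∣ X i * homogeneousComponent n (C 2 * extactic D i j) := by
    rw [← homogeneousComponent_add_mul_of_isHomogeneous (isHomogeneous_X k i), hkey, map_sub,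
      homogeneousComponent_add_mul_of_isHomogeneous (isHomogeneous_X k j)]
    exact dvd_sub (dvd_homogeneousComponent (isHomogeneous_sqRadius i j) (dvd_mul_right _ _) _)
      (h.mul_left _)
  rw [homogeneousComponent_C_mul] at hXE
  exact ((two_ne_zero (α := k)).isUnit.map C).dvd_mul_left.mp (hX.dvd_of_dvd_mul_left hXE)

lemma sqRadius_dvd_homogeneousComponent_derivation (hk : ¬IsSquare (-1 : k)) (hij : i ≠ j)
    (hD : ∀ l, (D (X l)).totalDegree ≤ m) {g : MvPolynomial σ k} (hg : g.totalDegree ≤ 2)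
    (hinv : sqRadius k i j ^ 2 + g ∣ D (sqRadius k i j ^ 2 + g)) {n : ℕ} (hn : m ≤ n) :
    sqRadius k i j ∣ homogeneousComponent n (D (sqRadius k i j)) := by
  have := neZero_two_of_not_isSquare_neg_one hk
  have hdeg : (sqRadius k i j).totalDegree = 2 :=
    (isHomogeneous_sqRadius i j).totalDegree (sqRadius_ne_zero hij)
  exact dvd_homogeneousComponent_derivation hD (isHomogeneous_sqRadius i j)
    (hdeg ▸ two_ne_zero) (hdeg ▸ hg) hinv hn

end Plane

lemma h1q_eq_sqRadius_sq_add (q : ℕ) (a : ℝ) :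
    ∃ g : MvPolynomial (Fin (q + 2)) ℝ, g.totalDegree ≤ 2 ∧ h1q q a = sqRadius ℝ 0 1 ^ 2 + g := by
  set Z : MvPolynomial (Fin (q + 2)) ℝ :=
    ∑ j : Fin q, X (⟨2 + (j : ℕ), by omega⟩ : Fin (q + 2)) ^ 2 with hZ
  refine ⟨C (-2 * a ^ 2) * sqRadius ℝ 0 1 + Z + C (a ^ 4 - 1), ?_, ?_⟩
  · have hrad : (C (-2 * a ^ 2) * sqRadius ℝ (0 : Fin (q + 2)) 1).totalDegree ≤ 2 :=
      ((isHomogeneous_sqRadius 0 1).C_mul _).totalDegree_le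
    have hZdeg : Z.totalDegree ≤ 2 :=
      (IsHomogeneous.sum _ _ 2 fun _ _ => isHomogeneous_X_pow _ 2).totalDegree_le
    have hC : (C (a ^ 4 - 1) : MvPolynomial (Fin (q + 2)) ℝ).totalDegree ≤ 2 := by
      rw [totalDegree_C]
      exact Nat.zero_le 2
    exact (totalDegree_add _ _).trans (max_le ((totalDegree_add _ _).trans (max_le hrad hZdeg)) hC)
  · rw [h1q, ← hZ, sqRadius]
    simp only [map_sub, map_mul, map_neg, map_pow, map_one, map_ofNat]
    ring

theorem stmt15_general {σ k : Type*} [Field k] (hk : ¬IsSquare (-1 : k)) {i j : σ} (hij : i ≠ j)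
    {D : Derivation k (MvPolynomial σ k) (MvPolynomial σ k)} {m : ℕ}
    (hD : ∀ l, (D (X l)).totalDegree ≤ m) {g : MvPolynomial σ k} (hg : g.totalDegree ≤ 2)
    (hinv : sqRadius k i j ^ 2 + g ∣ D (sqRadius k i j ^ 2 + g))
    (hE : extactic D i j ≠ 0) {s : Finset (k × k)} (hs0 : ∀ v ∈ s, v ≠ 0)
    (hsinv : ∀ v ∈ s, linearForm i j v ∣ D (linearForm i j v))
    (hprop : ∀ v ∈ s, ∀ w ∈ s, v ≠ w → ∀ t : k, v ≠ t • w) : s.card < m := by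
  have hEdeg : (extactic D i j).totalDegree ≤ m + 1 := totalDegree_extactic_le hD
  have hP : (∏ v ∈ s, linearForm i j v).IsHomogeneous s.card := isHomogeneous_prod_linearForm i j s
  have hPE : ∏ v ∈ s, linearForm i j v ∣ extactic D i j :=
    prod_linearForm_dvd_extactic hij hs0 hprop hsinv
  rcases lt_or_ge (extactic D i j).totalDegree m with hlt | hge
  · exact (le_totalDegree_of_isHomogeneous_of_dvd hP hE hPE).trans_lt hlt
  have hrel : IsRelPrime (∏ v ∈ s, linearForm i j v) (sqRadius k i j) :=
    IsRelPrime.prod_left fun v hv => isRelPrime_linearForm_sqRadius hk hij (hs0 v hv)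
  have htop : (∏ v ∈ s, linearForm i j v) * sqRadius k i j
      ∣ homogeneousComponent (extactic D i j).totalDegree (extactic D i j) :=
    hrel.mul_dvd (dvd_homogeneousComponent hP hPE _)
      (sqRadius_dvd_homogeneousComponent_extactic hk hij
        (sqRadius_dvd_homogeneousComponent_derivation hk hij hD hg hinv hge))
  have hcard : s.card + 2 ≤ (extactic D i j).totalDegree :=
    (le_totalDegree_of_isHomogeneous_of_dvd (hP.mul (isHomogeneous_sqRadius i j))
      (homogeneousComponent_totalDegree_ne_zero hE) htop).trans
      (homogeneousComponent_isHomogeneous _ _).totalDegree_le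
  omega

/-- For a polynomial vector field `X = Σ Rᵢ ∂/∂xᵢ` of degree `m` defined on `S_{1,q}`
with `x₁R₂ − x₂R₁ ≠ 0` (the extactic polynomial for `W = span{x₁,x₂}`), there are at
most `m − 1` pairwise non-proportional nonzero pairs `(a₁,a₂) ∈ ℝ²` whose hyperplane
`{a₁x₁ + a₂x₂ = 0}` is invariant for `X`; since each such hyperplane meets `S_{1,q}` in
two connected components, `X` has at most `2(m−1)` invariant meridians. -/
theorem stmt15 (q : ℕ) (hq : 1 ≤ q) (a : ℝ) (ha : 1 < a) (m : ℕ)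
    (R : Fin (q+2) → MvPolynomial (Fin (q+2)) ℝ)
    (hdeg : ∀ i, (R i).totalDegree ≤ m) (hdeg' : ∃ i, (R i).totalDegree = m)
    (K : MvPolynomial (Fin (q+2)) ℝ)
    (hinv : (∑ i, R i * pderiv i (h1q q a)) = K * h1q q a)
    (hE : X 0 * R 1 - X 1 * R 0 ≠ 0)
    (s : Finset (ℝ × ℝ))
    (hs0 : ∀ v ∈ s, v ≠ 0)
    (hsinv : ∀ v ∈ s, ∃ K' : MvPolynomial (Fin (q+2)) ℝ,
        (∑ i, R i * pderiv i (C v.1 * X 0 + C v.2 * X 1))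
          = K' * (C v.1 * X 0 + C v.2 * X 1))
    (hprop : ∀ v ∈ s, ∀ w ∈ s, v ≠ w → ∀ t : ℝ, v ≠ (t * w.1, t * w.2)) :
    s.card ≤ m - 1 := by
  obtain ⟨g, hg, hh⟩ := h1q_eq_sqRadius_sq_add q a
  exact Nat.le_sub_one_of_lt (stmt15_general (D := mkDerivation ℝ R)
    (fun h => absurd h.nonneg (by norm_num)) Fin.zero_ne_one
    (fun l => by simpa only [mkDerivation_X] using hdeg l) hg
    (hh ▸ dvd_mkDerivation_iff.mpr ⟨K, hinv⟩) (by simpa only [extactic, mkDerivation_X] using hE)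
    hs0 (fun v hv => dvd_mkDerivation_iff.mpr (hsinv v hv)) hprop)
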